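/- (First-order (KKT) conditions, eq. (A.1).) For every base-forecast vector ŷ : Fin m → ℝ, set ỹ := (M * Ωᵀ).mulVec ŷ and λ̃ := ((C * W_c * Cᵀ)⁻¹ * C * W_c * Kᵀ * W⁻¹).mulVec ŷ. Then the pair (ỹ, λ̃) solves the stationarity system of the constrained quadratic program: (Kᵀ * W⁻¹ * K).mulVec ỹ + Cᵀ.mulVec λ̃ = (Kᵀ * W⁻¹).mulVec ŷ and C.mulVec ỹ = 0. -/

import Mathlib

open Matrix

/-! With `P = W⁻¹`, `A = Kᵀ P K` and `b = Kᵀ P ŷ`, symmetry of `P` turns `Ωᵀ ŷ` into the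
unconstrained minimizer `A⁻¹ b`. Block elimination in the saddle-point system `A y + Cᵀ l = b`,
`C y = 0` then gives the multiplier `l = (C A⁻¹ Cᵀ)⁻¹ C A⁻¹ b`, and substituting it back amounts to
projecting `A⁻¹ b` onto `ker C` along the range of `A⁻¹ Cᵀ`. -/

section SaddlePoint

variable {R n u : Type*} [CommRing R] [Fintype n] [DecidableEq n] [Fintype u] [DecidableEq u]

/-- The oblique projection onto `ker C` along the range of `V * B`, when `C * V * B` is invertible.
With `V = A⁻¹` it eliminates the multiplier from the system `A y + B l = b`, `C y = 0`; the
constrained quadratic program has `B = Cᵀ`. -/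
noncomputable def constraintProjection (V : Matrix n n R) (B : Matrix n u R) (C : Matrix u n R) :
    Matrix n n R :=
  1 - V * B * (C * V * B)⁻¹ * C

theorem mul_constraintProjection_eq_zero (V : Matrix n n R) (B : Matrix n u R)
    (C : Matrix u n R) (hS : IsUnit (C * V * B).det) :
    C * constraintProjection V B C = 0 := by
  have hC : C * (V * B * (C * V * B)⁻¹ * C) = C := by
    simpa only [Matrix.mul_assoc] using mul_nonsing_inv_cancel_left (C * V * B) C hS
  rw [constraintProjection, Matrix.mul_sub, Matrix.mul_one, hC, sub_self]

theorem mul_constraintProjection_inv (A : Matrix n n R) (B : Matrix n u R) (C : Matrix u n R)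
    (hA : IsUnit A.det) :
    A * constraintProjection A⁻¹ B C = A - B * (C * A⁻¹ * B)⁻¹ * C := by
  simp only [constraintProjection, Matrix.mul_sub, Matrix.mul_one, Matrix.mul_assoc,
    mul_nonsing_inv_cancel_left A _ hA]

theorem saddlePoint_stationarity (A : Matrix n n R) (B : Matrix n u R) (C : Matrix u n R)
    (hA : IsUnit A.det) (b : n → R) :
    A *ᵥ constraintProjection A⁻¹ B C *ᵥ A⁻¹ *ᵥ b +
      B *ᵥ ((C * A⁻¹ * B)⁻¹ * C * A⁻¹) *ᵥ b = b := by
  have hcancel : A * constraintProjection A⁻¹ B C * A⁻¹ +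
      B * ((C * A⁻¹ * B)⁻¹ * C * A⁻¹) = 1 := by
    rw [mul_constraintProjection_inv A B C hA, Matrix.sub_mul, mul_nonsing_inv A hA]
    simp only [Matrix.mul_assoc, sub_add_cancel]
  simpa only [mulVec_mulVec, ← add_mulVec, Matrix.mul_assoc, one_mulVec]
    using congrArg (· *ᵥ b) hcancel

end SaddlePoint

theorem transpose_mul_mul_inv_of_isSymm {R m n : Type*} [CommRing R] [Fintype m] [Fintype n]
    [DecidableEq n] {P : Matrix m m R} (hP : P.IsSymm) (K : Matrix m n R) :
    (P * K * (Kᵀ * P * K)⁻¹)ᵀ = (Kᵀ * P * K)⁻¹ * (Kᵀ * P) := by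
  simp only [transpose_mul, transpose_nonsing_inv, transpose_transpose, hP.eq, Matrix.mul_assoc]

/-- `P` plays the role of `W⁻¹`. -/
theorem occ_kkt_general {R m n u : Type*} [CommRing R] [Fintype m] [Fintype n] [DecidableEq n]
    [Fintype u] [DecidableEq u]
    (P : Matrix m m R) (hP : P.IsSymm)
    (K : Matrix m n R) (hK : IsUnit (Kᵀ * P * K).det)
    (C : Matrix u n R) (hC : IsUnit (C * (Kᵀ * P * K)⁻¹ * Cᵀ).det)
    (yhat : m → R) :
    let W_c : Matrix n n R := (Kᵀ * P * K)⁻¹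
    let Ω : Matrix m n R := P * K * W_c
    let M : Matrix n n R := 1 - W_c * Cᵀ * (C * W_c * Cᵀ)⁻¹ * C
    let ytilde : n → R := (M * Ωᵀ) *ᵥ yhat
    let lam : u → R := ((C * W_c * Cᵀ)⁻¹ * C * W_c * Kᵀ * P) *ᵥ yhat
    (Kᵀ * P * K) *ᵥ ytilde + Cᵀ *ᵥ lam = (Kᵀ * P) *ᵥ yhat ∧ C *ᵥ ytilde = 0 := by
  intro W_c Ω M ytilde lam
  have hΩ : Ωᵀ = W_c * (Kᵀ * P) := transpose_mul_mul_inv_of_isSymm hP K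
  have hytilde : ytilde = M *ᵥ W_c *ᵥ (Kᵀ * P) *ᵥ yhat := by
    simp only [ytilde, hΩ, mulVec_mulVec]
  have hlam : lam = ((C * W_c * Cᵀ)⁻¹ * C * W_c) *ᵥ (Kᵀ * P) *ᵥ yhat := by
    simp only [lam, mulVec_mulVec, Matrix.mul_assoc]
  have hCM : C * M = 0 := mul_constraintProjection_eq_zero W_c Cᵀ C hC
  constructor
  · rw [hytilde, hlam]
    exact saddlePoint_stationarity (Kᵀ * P * K) Cᵀ C hK ((Kᵀ * P) *ᵥ yhat)
  · rw [hytilde, mulVec_mulVec, hCM, zero_mulVec]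

/-- Eq. (A.1): the pair (ỹ, λ̃) solves the first-order (KKT) stationarity system
of the constrained quadratic program. `lam` plays the role of λ̃. -/
theorem occ_kkt {m n u : ℕ}
    (W : Matrix (Fin m) (Fin m) ℝ) (hW : W.PosDef)
    (K : Matrix (Fin m) (Fin n) ℝ) (hK : (Kᵀ * W⁻¹ * K).PosDef)
    (C : Matrix (Fin u) (Fin n) ℝ)
    (hC : (C * (Kᵀ * W⁻¹ * K)⁻¹ * Cᵀ).PosDef)
    (yhat : Fin m → ℝ) :
    let W_c : Matrix (Fin n) (Fin n) ℝ := (Kᵀ * W⁻¹ * K)⁻¹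
    let Ω : Matrix (Fin m) (Fin n) ℝ := W⁻¹ * K * W_c
    let M : Matrix (Fin n) (Fin n) ℝ := 1 - W_c * Cᵀ * (C * W_c * Cᵀ)⁻¹ * C
    let ytilde : Fin n → ℝ := (M * Ωᵀ).mulVec yhat
    let lam : Fin u → ℝ :=
      ((C * W_c * Cᵀ)⁻¹ * C * W_c * Kᵀ * W⁻¹).mulVec yhat
    (Kᵀ * W⁻¹ * K).mulVec ytilde + Cᵀ.mulVec lam = (Kᵀ * W⁻¹).mulVec yhat ∧
      C.mulVec ytilde = 0 := by
  exact occ_kkt_general W⁻¹ (isHermitian_iff_isSymm.1 hW.inv.isHermitian) K hK.det_pos.ne'.isUnit C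
    hC.det_pos.ne'.isUnit yhat
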